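/- Let Q be a Noetherian ring, f a nonzerodivisor on Q, R = Q/(f), and M, N R-modules. If Tor_i^Q(M,N) = 0 for all i ≥ n, then Tor_i^R(M,N) ≅ Tor_{i+2}^R(M,N) for all i ≥ n − 1. -/

import Mathlib

open CategoryTheory

/-- The `i`-th Tor group of two modules over a commutative ring, as an object of `ModuleCat`. -/
noncomputable abbrev TorObj (A : Type) [CommRing A] (i : ℕ)
    (M N : Type) [AddCommGroup M] [Module A M] [AddCommGroup N] [Module A N] :
    ModuleCat.{0} A :=
  ((Tor (ModuleCat.{0} A) i).obj (ModuleCat.of A M)).obj (ModuleCat.of A N)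

/-- An unbundled projective resolution. -/
structure PRes (A : Type) [CommRing A] (N : Type) [AddCommGroup N] [Module A N] where
  X : ℕ → ModuleCat.{0} A
  d : ∀ i, X (i + 1) →ₗ[A] X i
  ε : X 0 →ₗ[A] N
  proj : ∀ i, Module.Projective A (X i)
  ex : ∀ i, Function.Exact (d (i + 1)) (d i)
  ex0 : Function.Exact (d 0) ε
  surj : Function.Surjective ε

namespace PRes

variable {A : Type} [CommRing A] {N : Type} [AddCommGroup N] [Module A N]

/-- outgoing differential -/
def prevd (r : PRes A N) : ∀ i : ℕ, r.X i →ₗ[A] r.X (i - 1)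
  | 0 => 0
  | i + 1 => r.d i

theorem exists_pres (A : Type) [CommRing A] (N : Type) [AddCommGroup N] [Module A N] :
    Nonempty (PRes A N) := by
  let P := projectiveResolution (ModuleCat.of A N)
  let e : P.complex.X 0 ⟶ ModuleCat.of A N := P.π.f 0
  have he : Epi e := inferInstanceAs (Epi (P.π.f 0))
  have hex0 : Function.Exact (P.complex.d 1 0).hom e.hom := by
    have := ShortComplex.exact_of_g_is_cokernel
      (ShortComplex.mk (P.complex.d 1 0) e P.complex_d_comp_π_f_zero) P.isColimitCokernelCofork
    exact (ShortComplex.ShortExact.moduleCat_exact_iff_function_exact _).1 this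
  exact ⟨{
    X := P.complex.X
    d := fun i => (P.complex.d (i + 1) i).hom
    ε := e.hom
    proj := fun i => (IsProjective.iff_projective _).2 (P.projective i)
    ex := fun i => (ShortComplex.ShortExact.moduleCat_exact_iff_function_exact _).1 (P.exact_succ i)
    ex0 := hex0
    surj := (ModuleCat.epi_iff_surjective e).1 he }⟩

variable (r : PRes A N)

noncomputable def cx : ChainComplex (ModuleCat.{0} A) ℕ :=
  ChainComplex.of r.X (fun i => ModuleCat.ofHom (r.d i)) (fun i => by
    ext x
    exact (r.ex i).apply_apply_eq_zero x)

theorem cx_d (i : ℕ) : r.cx.d (i + 1) i = ModuleCat.ofHom (r.d i) := by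
  unfold cx
  exact ChainComplex.of_d r.X (fun i => ModuleCat.ofHom (r.d i)) i

noncomputable def cxπ : r.cx ⟶ (ChainComplex.single₀ (ModuleCat.{0} A)).obj (ModuleCat.of A N) :=
  (r.cx.toSingle₀Equiv _).symm ⟨ModuleCat.ofHom r.ε, by
    rw [cx_d]; ext x; exact r.ex0.apply_apply_eq_zero x⟩

theorem cxπ_zero : r.cxπ.f 0 = ModuleCat.ofHom r.ε :=
  ChainComplex.toSingle₀Equiv_symm_apply_f_zero _ _

theorem cxπ_quasiIso : QuasiIso r.cxπ where
  quasiIsoAt m := by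
    cases m with
    | zero =>
      rw [ChainComplex.quasiIsoAt₀_iff, ShortComplex.quasiIso_iff_of_zeros' _ _ rfl rfl]
      · constructor
        · rw [ShortComplex.ShortExact.moduleCat_exact_iff_function_exact]
          intro y
          have h1 : (r.cxπ.f 0).hom y = r.ε y := by rw [cxπ_zero]; rfl
          have h2 : ∀ z, (r.cx.d 1 0).hom z = r.d 0 z := fun z => by rw [cx_d]; rfl
          have h3 : ((r.cxπ.f 0).hom y = 0) ↔ ∃ z, (r.cx.d 1 0).hom z = y := by
            rw [h1]
            simp only [h2]
            exact r.ex0 y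
          exact h3
        · have h1 : ((HomologicalComplex.shortComplexFunctor' (ModuleCat A) (ComplexShape.down ℕ) 1 0 0).map
              r.cxπ).τ₂ = ModuleCat.ofHom r.ε := r.cxπ_zero
          rw [h1]
          exact (ModuleCat.epi_iff_surjective _).2 r.surj
      · exact r.cx.shape 0 0 (by simp)
    | succ m =>
      rw [quasiIsoAt_iff_exactAt' (hL := ChainComplex.exactAt_succ_single_obj ..),
          HomologicalComplex.exactAt_iff' _ (m + 2) (m + 1) m (by simp) (by simp)]
      rw [ShortComplex.ShortExact.moduleCat_exact_iff_function_exact]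
      change Function.Exact (r.cx.d (m + 2) (m + 1)) (r.cx.d (m + 1) m)
      rw [cx_d, cx_d]
      exact r.ex m

noncomputable def toPR : ProjectiveResolution (ModuleCat.of A N) where
  complex := r.cx
  projective i := (IsProjective.iff_projective _).1 (r.proj i)
  π := r.cxπ
  quasiIso := r.cxπ_quasiIso

theorem torIso (M : Type) [AddCommGroup M] [Module A M] (i : ℕ)
    (h0 : ((r.prevd i).lTensor M) ∘ₗ ((r.d i).lTensor M) = 0) :
    Nonempty (TorObj A i M N ≅
      (ShortComplex.moduleCatMk ((r.d i).lTensor M) ((r.prevd i).lTensor M) h0).homology) := by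
  let F := (MonoidalCategory.tensoringLeft (ModuleCat.{0} A)).obj (ModuleCat.of A M)
  let K := ((F.mapHomologicalComplex (ComplexShape.down ℕ)).obj r.cx)
  have e1 : TorObj A i M N ≅ K.homology i := r.toPR.isoLeftDerivedObj F i
  have hn : (ComplexShape.down ℕ).next i = i - 1 := by cases i <;> simp
  have e2 := ShortComplex.homologyMapIso (K.isoSc' (i+1) i (i-1) (by simp) hn)
  have hf : (K.sc' (i+1) i (i-1)).f = ModuleCat.ofHom ((r.d i).lTensor M) := by
    change F.map (r.cx.d (i+1) i) = _
    rw [cx_d]; rfl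
  have hg : (K.sc' (i+1) i (i-1)).g = ModuleCat.ofHom ((r.prevd i).lTensor M) := by
    change F.map (r.cx.d i (i-1)) = _
    cases i with
    | zero =>
      rw [r.cx.shape _ _ (by simp), F.map_zero]
      ext x
      change 0 = (LinearMap.lTensor M 0) x
      simp
    | succ i => 
      change F.map (r.cx.d (i+1) i) = _
      rw [cx_d]; rfl
  have e3 : K.sc' (i+1) i (i-1) ≅
      ShortComplex.moduleCatMk ((r.d i).lTensor M) ((r.prevd i).lTensor M) h0 :=
    ShortComplex.isoMk (Iso.refl _) (Iso.refl _) (Iso.refl _)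
      (by
        change 𝟙 _ ≫ ModuleCat.ofHom ((r.d i).lTensor M) = (K.sc' (i+1) i (i-1)).f ≫ 𝟙 _
        rw [hf]; rfl)
      (by
        change 𝟙 _ ≫ ModuleCat.ofHom ((r.prevd i).lTensor M) = (K.sc' (i+1) i (i-1)).g ≫ 𝟙 _
        rw [hg]; rfl)
  exact ⟨e1 ≪≫ e2 ≪≫ ShortComplex.homologyMapIso e3⟩

theorem prevd_comp (M : Type) [AddCommGroup M] [Module A M] (i : ℕ) :
    ((r.prevd i).lTensor M) ∘ₗ ((r.d i).lTensor M) = 0 := by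
  rw [← LinearMap.lTensor_comp]
  have : (r.prevd i) ∘ₗ (r.d i) = 0 := by
    cases i with
    | zero => ext x; rfl
    | succ i => ext x; exact (r.ex i).apply_apply_eq_zero x
  rw [this, LinearMap.lTensor_zero]

theorem exact_of_tor (M : Type) [AddCommGroup M] [Module A M] (i : ℕ)
    (h : Subsingleton (TorObj A (i+1) M N)) :
    Function.Exact ((r.d (i+1)).lTensor M) ((r.d i).lTensor M) := by
  obtain ⟨e⟩ := r.torIso M (i+1) (r.prevd_comp M (i+1))
  have h1 : Limits.IsZero (TorObj A (i+1) M N) := ModuleCat.isZero_of_subsingleton _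
  have h2 := h1.of_iso e.symm
  rw [← ShortComplex.exact_iff_isZero_homology,
    ShortComplex.ShortExact.moduleCat_exact_iff_function_exact] at h2
  exact h2

end PRes

theorem homology_iso {R : Type} [CommRing R] (S T : ShortComplex (ModuleCat.{0} R))
    (t : S.X₂ →ₗ[R] T.X₂) (h1 : ∀ x, S.g x = 0 → T.g (t x) = 0)
    (h2 : ∀ y, T.g y = 0 → ∃ x, S.g x = 0 ∧ t x = y)
    (h3 : ∀ x, S.g x = 0 → ((∃ y, T.f y = t x) ↔ ∃ z, S.f z = x)) :
    Nonempty (S.homology ≅ T.homology) := by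
  let t' : LinearMap.ker S.g.hom →ₗ[R] LinearMap.ker T.g.hom :=
    (t ∘ₗ (LinearMap.ker S.g.hom).subtype).codRestrict _ (fun x => h1 x.1 x.2)
  let q := (LinearMap.range T.moduleCatToCycles).mkQ ∘ₗ t'
  have hq : Function.Surjective q := by
    refine (Submodule.mkQ_surjective _).comp ?_
    rintro ⟨y, hy⟩
    obtain ⟨x, hx, rfl⟩ := h2 y hy
    exact ⟨⟨x, hx⟩, rfl⟩
  have hk : LinearMap.range S.moduleCatToCycles = LinearMap.ker q := by
    ext ⟨x, hx⟩
    have := h3 x hx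
    rw [LinearMap.ker_comp, Submodule.ker_mkQ]
    simp only [LinearMap.mem_range, Submodule.mem_comap, Subtype.ext_iff]
    exact this.symm
  exact ⟨S.moduleCatHomologyIso ≪≫
    ((Submodule.quotEquivOfEq _ _ hk).trans (q.quotKerEquivOfSurjective hq)).toModuleIso ≪≫
    T.moduleCatHomologyIso.symm⟩

/-- The complex obtained by base change. -/
structure BarC (A : Type) [CommRing A] (N : Type) [AddCommGroup N] [Module A N] where
  X : ℕ → ModuleCat.{0} A
  d : ∀ i, X (i + 1) →ₗ[A] X i
  ε : X 0 →ₗ[A] N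
  proj : ∀ i, Module.Projective A (X i)
  dd : ∀ i x, d i (d (i + 1) x) = 0
  ex : ∀ i x, d (i + 1) x = 0 → ∃ y, d (i + 2) y = x
  ex0 : Function.Exact (d 0) ε
  surj : Function.Surjective ε
  δ : LinearMap.ker (d 0) →ₗ[A] N
  δ_surj : Function.Surjective δ
  δ_ker : ∀ z, δ z = 0 → ∃ y, d 1 y = z
  δ_d : ∀ y h, δ ⟨d 1 y, h⟩ = 0

section base
open TensorProduct

variable {Q : Type} [CommRing Q] (f : Q)

theorem one_tmul_surj (P : Type) [AddCommGroup P] [Module Q P]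
    (x : (Q ⧸ Ideal.span {f}) ⊗[Q] P) : ∃ p : P, (1 : Q ⧸ Ideal.span {f}) ⊗ₜ[Q] p = x := by
  induction x with
  | zero => exact ⟨0, by simp⟩
  | add x y hx hy =>
    obtain ⟨p, rfl⟩ := hx
    obtain ⟨q, rfl⟩ := hy
    exact ⟨p + q, tmul_add _ _ _⟩
  | tmul a p =>
    obtain ⟨q, rfl⟩ := Ideal.Quotient.mk_surjective a
    refine ⟨q • p, ?_⟩
    rw [← smul_tmul, Algebra.smul_def, mul_one]; rfl

theorem one_tmul_eq_zero (P : Type) [AddCommGroup P] [Module Q P]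
    (p : P) : (1 : Q ⧸ Ideal.span {f}) ⊗ₜ[Q] p = 0 ↔ ∃ p', p = f • p' := by
  constructor
  · intro h
    have h2 := congrArg (TensorProduct.quotTensorEquivQuotSMul P (Ideal.span {f})) h
    rw [map_zero, ← map_one (Ideal.Quotient.mk _), TensorProduct.quotTensorEquivQuotSMul_mk_tmul,
      one_smul, Submodule.Quotient.mk_eq_zero, Submodule.ideal_span_singleton_smul,
      Submodule.mem_smul_pointwise_iff_exists] at h2
    obtain ⟨b, -, hb⟩ := h2
    exact ⟨b, hb.symm⟩
  · rintro ⟨p', rfl⟩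
    rw [← smul_tmul, Algebra.smul_def, mul_one]
    have : algebraMap Q (Q ⧸ Ideal.span {f}) f = 0 :=
      Ideal.Quotient.eq_zero_iff_mem.2 (Ideal.mem_span_singleton_self f)
    rw [this, zero_tmul]

theorem f_inj (hf : f ∈ nonZeroDivisors Q) (P : Type) [AddCommGroup P] [Module Q P]
    [Module.Projective Q P] (p : P) (h : f • p = 0) : p = 0 := by
  obtain ⟨s, hs⟩ := Module.Projective.out (R := Q) (P := P)
  have h1 : f • s p = 0 := by rw [← map_smul, h, map_zero]
  have h2 : s p = 0 := by
    ext x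
    have := DFunLike.congr_fun h1 x
    simp only [Finsupp.smul_apply, smul_eq_mul, Finsupp.zero_apply] at this ⊢
    exact (mul_left_mem_nonZeroDivisors_eq_zero_iff hf).1 this
  rw [← hs p, h2, map_zero]

theorem exists_bar (hf : f ∈ nonZeroDivisors Q) (N : Type) [AddCommGroup N]
    [Module Q N] [Module (Q ⧸ Ideal.span {f}) N] [IsScalarTower Q (Q ⧸ Ideal.span {f}) N]
    (r : PRes Q N) : ∃ b : BarC (Q ⧸ Ideal.span {f}) N,
      ∀ (M : Type) [AddCommGroup M] [Module Q M] [Module (Q ⧸ Ideal.span {f}) M]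
        [IsScalarTower Q (Q ⧸ Ideal.span {f}) M] (i : ℕ),
        Function.Exact ((r.d (i+1)).lTensor M) ((r.d i).lTensor M) →
        Function.Exact ((b.d (i+1)).lTensor M) ((b.d i).lTensor M) := by
  set R := Q ⧸ Ideal.span {f} with hR
  have hπd : ∀ i p, ((r.d i).baseChange R) (1 ⊗ₜ p) = 1 ⊗ₜ r.d i p := fun i p => by simp
  have hdd : ∀ i p, r.d i (r.d (i+1) p) = 0 := fun i p => (r.ex i).apply_apply_eq_zero p
  have inj : ∀ i (p : r.X i), f • p = 0 → p = 0 := fun i p => by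
    have := r.proj i
    exact f_inj f hf _ p
  have hfN : ∀ x : N, f • x = 0 := fun x => by
    rw [← one_smul R x, ← smul_assoc, Algebra.smul_def, mul_one]
    have : algebraMap Q R f = 0 :=
      Ideal.Quotient.eq_zero_iff_mem.2 (Ideal.mem_span_singleton_self f)
    rw [this, zero_smul]
  -- the connecting map
  have key : ∀ z : LinearMap.ker ((r.d 0).baseChange R), ∃ (p1 : r.X 1) (p0 : r.X 0),
      1 ⊗ₜ p1 = z.1 ∧ r.d 0 p1 = f • p0 := by
    rintro ⟨z, hz⟩
    obtain ⟨p1, rfl⟩ := one_tmul_surj f _ z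
    rw [LinearMap.mem_ker, hπd] at hz
    obtain ⟨p0, h0⟩ := (one_tmul_eq_zero f _ _).1 hz
    exact ⟨p1, p0, rfl, h0⟩
  choose c1 c0 hc1 hc0 using key
  have uniq : ∀ z (p1 : r.X 1) (p0 : r.X 0), 1 ⊗ₜ p1 = z.1 → r.d 0 p1 = f • p0 →
      r.ε (c0 z) = r.ε p0 := by
    intro z p1 p0 h1 h0
    have h2 : (1 : R) ⊗ₜ[Q] (c1 z - p1) = 0 := by rw [tmul_sub, hc1, h1, sub_self]
    obtain ⟨q, hq⟩ := (one_tmul_eq_zero f _ _).1 h2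
    have h3 : f • (c0 z - p0 - r.d 0 q) = 0 := by
      rw [smul_sub, smul_sub, ← hc0, ← h0, ← map_sub, hq, map_smul, sub_self]
    have h4 := inj _ _ h3
    have h5 := congrArg r.ε h4
    rw [map_sub, map_sub, r.ex0.apply_apply_eq_zero, map_zero, sub_zero, sub_eq_zero] at h5
    exact h5
  let δ : LinearMap.ker ((r.d 0).baseChange R) →ₗ[R] N :=
    { toFun := fun z => r.ε (c0 z)
      map_add' := fun x y => by
        rw [← map_add]
        refine uniq _ (c1 x + c1 y) _ ?_ ?_
        · rw [tmul_add, hc1, hc1]; rfl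
        · rw [map_add, hc0, hc0, smul_add]
      map_smul' := fun a x => by
        obtain ⟨q, rfl⟩ := Ideal.Quotient.mk_surjective a
        have e : ∀ n : N, (Ideal.Quotient.mk (Ideal.span {f}) q) • n = q • n := fun n => by
          rw [← one_smul R n, ← smul_assoc, ← smul_assoc, Algebra.smul_def]; rfl
        rw [RingHom.id_apply, e, ← map_smul]
        refine uniq _ (q • c1 x) _ ?_ ?_
        · rw [← smul_tmul, Algebra.smul_def, mul_one]
          change _ = _ • x.1
          rw [← hc1, smul_tmul', smul_eq_mul, mul_one]; rfl
        · rw [map_smul, hc0, smul_comm] }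
  refine ⟨{
    X := fun i => ModuleCat.of R (R ⊗[Q] r.X i)
    d := fun i => (r.d i).baseChange R
    ε := r.ε.liftBaseChange R
    proj := fun i => by
      have := r.proj i
      exact inferInstanceAs (Module.Projective R (R ⊗[Q] r.X i))
    dd := ?_
    ex := ?_
    ex0 := ?_
    surj := ?_
    δ := δ
    δ_surj := ?_
    δ_ker := ?_
    δ_d := ?_ }, ?_⟩
  · intro i x
    obtain ⟨p, rfl⟩ := one_tmul_surj f _ x
    rw [hπd, hπd, hdd, tmul_zero]
  · intro i x hx
    obtain ⟨p, rfl⟩ := one_tmul_surj f _ x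
    rw [hπd] at hx
    obtain ⟨p0, h0⟩ := (one_tmul_eq_zero f _ _).1 hx
    have h1 : r.d i p0 = 0 := inj _ _ (by rw [← map_smul, ← h0, hdd])
    obtain ⟨p1, rfl⟩ := (r.ex i _).1 h1
    obtain ⟨p2, h2⟩ := (r.ex (i+1) (p - f • p1)).1 (by rw [map_sub, map_smul, h0, sub_self])
    refine ⟨1 ⊗ₜ p2, ?_⟩
    rw [hπd, h2, tmul_sub, (one_tmul_eq_zero f _ _).2 ⟨p1, rfl⟩, sub_zero]
  · intro x
    obtain ⟨p, rfl⟩ := one_tmul_surj f _ x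
    rw [LinearMap.liftBaseChange_tmul, one_smul]
    constructor
    · intro h
      obtain ⟨p1, rfl⟩ := (r.ex0 _).1 h
      exact ⟨1 ⊗ₜ p1, hπd _ _⟩
    · rintro ⟨y, hy⟩
      obtain ⟨p1, rfl⟩ := one_tmul_surj f _ y
      have h2 : (1 : R) ⊗ₜ[Q] (r.d 0 p1 - p) = 0 := by
        rw [tmul_sub, ← hπd, sub_eq_zero]; exact hy
      obtain ⟨q, hq⟩ := (one_tmul_eq_zero f _ _).1 h2
      have h5 := congrArg r.ε hq
      rw [map_sub, r.ex0.apply_apply_eq_zero, map_smul, hfN, zero_sub, neg_eq_zero] at h5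
      exact h5
  · intro x
    obtain ⟨p, rfl⟩ := r.surj x
    exact ⟨1 ⊗ₜ p, by rw [LinearMap.liftBaseChange_tmul, one_smul]⟩
  · intro x
    obtain ⟨p, rfl⟩ := r.surj x
    obtain ⟨p1, h1⟩ := (r.ex0 (f • p)).1 (by rw [map_smul, hfN])
    refine ⟨⟨1 ⊗ₜ p1, ?_⟩, ?_⟩
    · rw [LinearMap.mem_ker]
      exact (hπd _ _).trans (by rw [h1, one_tmul_eq_zero]; exact ⟨p, rfl⟩)
    · exact uniq _ p1 p rfl h1
  · intro z hz
    obtain ⟨q, hq⟩ := (r.ex0 _).1 hz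
    obtain ⟨p2, h2⟩ := (r.ex 0 (c1 z - f • q)).1 (by rw [map_sub, map_smul, hc0, hq, sub_self])
    refine ⟨1 ⊗ₜ p2, ?_⟩
    refine (hπd _ _).trans ?_
    rw [h2, tmul_sub, (one_tmul_eq_zero f _ _).2 ⟨q, rfl⟩, sub_zero, hc1]
  · intro y h
    obtain ⟨p, rfl⟩ := one_tmul_surj f _ y
    have := uniq ⟨_, h⟩ (r.d 1 p) 0 (hπd _ _).symm (by rw [hdd, smul_zero])
    rw [map_zero] at this
    exact this
  · intro M _ _ _ _ i h
    have sq : ∀ i (x : M ⊗[R] (R ⊗[Q] r.X (i+1))),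
        AlgebraTensorModule.cancelBaseChange Q R R M (r.X i)
          (((r.d i).baseChange R).lTensor M x) =
        (r.d i).lTensor M (AlgebraTensorModule.cancelBaseChange Q R R M (r.X (i+1)) x) := by
      intro i x
      induction x with
      | zero => simp
      | add x y hx hy => simp only [map_add, hx, hy]
      | tmul m y =>
        obtain ⟨p, rfl⟩ := one_tmul_surj f _ y
        simp
    have h2 : Function.Exact (((r.d (i+1)).baseChange R).lTensor M)
        (((r.d i).baseChange R).lTensor M) := by
      intro x
      rw [← (AlgebraTensorModule.cancelBaseChange Q R R M (r.X i)).map_eq_zero_iff, sq, h _]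
      constructor
      · rintro ⟨y, hy⟩
        refine ⟨(AlgebraTensorModule.cancelBaseChange Q R R M _).symm y, ?_⟩
        apply (AlgebraTensorModule.cancelBaseChange Q R R M (r.X (i+1))).injective
        rw [sq, LinearEquiv.apply_symm_apply, hy]
      · rintro ⟨y, rfl⟩
        exact ⟨_, (sq _ y).symm⟩
    exact h2

end base

section cone

variable {R : Type} [CommRing R] {N : Type} [AddCommGroup N] [Module R N]

theorem exists_phi (b : BarC R N) (G : PRes R N) :
    ∃ φ : ∀ i, G.X i →ₗ[R] b.X (i + 1),
      (∀ g, ∃ h : b.d 0 (φ 0 g) = 0, b.δ ⟨φ 0 g, h⟩ = G.ε g) ∧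
      ∀ i g, b.d (i + 1) (φ (i + 1) g) = - φ i (G.d i g) := by
  have := G.proj 0
  obtain ⟨ψ, hψ⟩ := Module.projective_lifting_property b.δ G.ε b.δ_surj
  let T : ℕ → Type := fun i =>
    {φ : G.X i →ₗ[R] b.X (i + 1) // ∀ g, ∃ y, b.d (i + 1) y = φ (G.d i g)}
  have lift : ∀ i (φ : T i), ∃ χ : T (i + 1), ∀ g, b.d (i + 1) (χ.1 g) = - φ.1 (G.d i g) := by
    rintro i ⟨φ, hφ⟩
    have := G.proj (i + 1)
    let t : G.X (i + 1) →ₗ[R] LinearMap.range (b.d (i + 1)) :=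
      (-(φ ∘ₗ G.d i)).codRestrict _ (fun g => by
        obtain ⟨y, hy⟩ := hφ g
        exact ⟨-y, by rw [map_neg, hy]; rfl⟩)
    obtain ⟨χ, hχ⟩ := Module.projective_lifting_property (b.d (i + 1)).rangeRestrict t
      (LinearMap.surjective_rangeRestrict _)
    have h1 : ∀ g, b.d (i + 1) (χ g) = - φ (G.d i g) := fun g =>
      congrArg Subtype.val (LinearMap.congr_fun hχ g)
    refine ⟨⟨χ, fun g => ?_⟩, h1⟩
    apply b.ex
    rw [h1, (G.ex i).apply_apply_eq_zero, map_zero, neg_zero]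
  choose nx hnx using lift
  let z : T 0 := ⟨(LinearMap.ker (b.d 0)).subtype ∘ₗ ψ, fun g => by
    have h1 : b.δ (ψ (G.d 0 g)) = 0 := by
      have := LinearMap.congr_fun hψ (G.d 0 g)
      rw [G.ex0.apply_apply_eq_zero] at this
      exact this
    exact b.δ_ker _ h1⟩
  let s : ∀ i, T i := fun i => Nat.rec z (fun i φ => nx i φ) i
  exact ⟨fun i => (s i).1, fun g => ⟨(ψ g).2, LinearMap.congr_fun hψ g⟩, fun i g => hnx i (s i) g⟩

variable (b : BarC R N) (G : PRes R N) (φ : ∀ i, G.X i →ₗ[R] b.X (i + 1))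

def coneX : ℕ → ModuleCat.{0} R
  | 0 => b.X 0
  | 1 => b.X 1
  | i + 2 => ModuleCat.of R (b.X (i + 2) × G.X i)

def coned : ∀ i, coneX b G (i + 1) →ₗ[R] coneX b G i
  | 0 => b.d 0
  | 1 => (b.d 1).coprod (φ 0)
  | i + 2 => ((b.d (i + 2)).coprod (φ (i + 1))).prod ((G.d i) ∘ₗ LinearMap.snd R _ _)

def conePRes (h0 : ∀ g, ∃ h : b.d 0 (φ 0 g) = 0, b.δ ⟨φ 0 g, h⟩ = G.ε g)
    (hs : ∀ i g, b.d (i + 1) (φ (i + 1) g) = - φ i (G.d i g)) : PRes R N where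
  X := coneX b G
  d := coned b G φ
  ε := b.ε
  proj
    | 0 => b.proj 0
    | 1 => b.proj 1
    | i + 2 => by
      have := b.proj (i + 2)
      have := G.proj i
      exact inferInstanceAs (Module.Projective R (b.X (i + 2) × G.X i))
  ex
    | 0 => by
      intro (x : b.X 1)
      constructor
      · intro hx
        obtain ⟨g, hg⟩ := G.surj (b.δ ⟨x, hx⟩)
        obtain ⟨h1, h2⟩ := h0 g
        have h3 : b.δ (⟨x, hx⟩ - ⟨φ 0 g, h1⟩) = 0 := by rw [map_sub, h2, hg, sub_self]
        obtain ⟨y, hy⟩ := b.δ_ker _ h3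
        refine ⟨((y, g) : b.X 2 × G.X 0), ?_⟩
        change b.d 1 y + φ 0 g = x
        rw [hy]
        exact sub_add_cancel _ _
      · rintro ⟨⟨y, g⟩, rfl⟩
        change b.d 0 (b.d 1 y + φ 0 g) = 0
        rw [map_add, b.dd, (h0 g).1, add_zero]
    | 1 => by
      intro (x : b.X 2 × G.X 0)
      obtain ⟨p, g⟩ := x
      constructor
      · intro hx
        change b.d 1 p + φ 0 g = 0 at hx
        obtain ⟨h1, h2⟩ := h0 g
        have h4 : φ 0 g = b.d 1 (-p) := by rw [map_neg]; exact eq_neg_of_add_eq_zero_right hx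
        have h3 : G.ε g = 0 := by
          rw [← h2]
          have h5 := b.δ_d (-p) (by rw [← h4]; exact h1)
          simp only [← h4] at h5
          exact h5
        obtain ⟨g1, rfl⟩ := (G.ex0 _).1 h3
        obtain ⟨y, hy⟩ := b.ex 0 (p - φ 1 g1) (by
          rw [map_sub, hs, sub_neg_eq_add]; exact hx)
        refine ⟨((y, g1) : b.X 3 × G.X 1), ?_⟩
        change (b.d 2 y + φ 1 g1, G.d 0 g1) = (p, G.d 0 g1)
        rw [hy, sub_add_cancel]
      · rintro ⟨⟨y, g1⟩, h⟩
        change (b.d 2 y + φ 1 g1, G.d 0 g1) = (p, g) at h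
        obtain ⟨rfl, rfl⟩ := Prod.mk.inj h
        change b.d 1 (b.d 2 y + φ 1 g1) + φ 0 (G.d 0 g1) = 0
        rw [map_add, b.dd, hs]
        simp
    | i + 2 => by
      intro (x : b.X (i + 3) × G.X (i + 1))
      obtain ⟨p, g⟩ := x
      constructor
      · intro hx
        change (b.d (i + 2) p + φ (i + 1) g, G.d i g) = (0, 0) at hx
        obtain ⟨hx, h3⟩ := Prod.mk.inj hx
        obtain ⟨g1, rfl⟩ := (G.ex i _).1 h3
        obtain ⟨y, hy⟩ := b.ex (i + 1) (p - φ (i + 2) g1) (by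
          rw [map_sub, hs, sub_neg_eq_add]; exact hx)
        refine ⟨((y, g1) : b.X (i + 4) × G.X (i + 2)), ?_⟩
        change (b.d (i + 3) y + φ (i + 2) g1, G.d (i + 1) g1) = (p, G.d (i + 1) g1)
        rw [hy, sub_add_cancel]
      · rintro ⟨⟨y, g1⟩, h⟩
        change (b.d (i + 3) y + φ (i + 2) g1, G.d (i + 1) g1) = (p, g) at h
        obtain ⟨rfl, rfl⟩ := Prod.mk.inj h
        change (b.d (i + 2) (b.d (i + 3) y + φ (i + 2) g1) + φ (i + 1) (G.d (i + 1) g1),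
          G.d i (G.d (i + 1) g1)) = (0, 0)
        rw [map_add, b.dd, hs, zero_add, neg_add_cancel, (G.ex i).apply_apply_eq_zero]
  ex0 := b.ex0
  surj := b.surj

open TensorProduct

theorem lT_coprod (M : Type) [AddCommGroup M] [Module R M] {P P' L : Type} [AddCommGroup P]
    [Module R P] [AddCommGroup P'] [Module R P'] [AddCommGroup L] [Module R L]
    (u : P →ₗ[R] L) (v : P' →ₗ[R] L) (x : M ⊗[R] (P × P')) :
    (u.coprod v).lTensor M x = u.lTensor M (TensorProduct.prodRight R R M P P' x).1 +
      v.lTensor M (TensorProduct.prodRight R R M P P' x).2 := by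
  induction x with
  | zero => simp
  | add x y hx hy => simp only [map_add, hx, hy, Prod.fst_add, Prod.snd_add]; abel
  | tmul m p => simp [tmul_add]

theorem lT_prod (M : Type) [AddCommGroup M] [Module R M] {P P' L L' : Type} [AddCommGroup P]
    [Module R P] [AddCommGroup P'] [Module R P'] [AddCommGroup L] [Module R L]
    [AddCommGroup L'] [Module R L']
    (u : P →ₗ[R] L) (v : P' →ₗ[R] L) (w : P' →ₗ[R] L') (x : M ⊗[R] (P × P')) :
    TensorProduct.prodRight R R M L L'
      (((u.coprod v).prod (w ∘ₗ LinearMap.snd R _ _)).lTensor M x) =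
      (u.lTensor M (TensorProduct.prodRight R R M P P' x).1 +
      v.lTensor M (TensorProduct.prodRight R R M P P' x).2,
      w.lTensor M (TensorProduct.prodRight R R M P P' x).2) := by
  induction x with
  | zero => simp; rfl
  | add x y hx hy =>
    simp only [map_add, hx, hy, Prod.fst_add, Prod.snd_add, Prod.mk_add_mk]
    congr 1
    abel
  | tmul m p => simp [tmul_add]

theorem tor_iso_of_exact (h0 : ∀ g, ∃ h : b.d 0 (φ 0 g) = 0, b.δ ⟨φ 0 g, h⟩ = G.ε g)
    (hs : ∀ i g, b.d (i + 1) (φ (i + 1) g) = - φ i (G.d i g))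
    (M : Type) [AddCommGroup M] [Module R M] (i : ℕ)
    (e1 : Function.Exact ((b.d (i+1)).lTensor M) ((b.d i).lTensor M))
    (e2 : Function.Exact ((b.d (i+2)).lTensor M) ((b.d (i+1)).lTensor M)) :
    Nonempty (TorObj R i M N ≅ TorObj R (i + 2) M N) := by
  let C := conePRes b G φ h0 hs
  obtain ⟨a1⟩ := G.torIso M i (G.prevd_comp M i)
  obtain ⟨a2⟩ := C.torIso M (i + 2) (C.prevd_comp M (i + 2))
  let E2 : M ⊗[R] (b.X (i + 2) × G.X i) ≃ₗ[R] (M ⊗[R] b.X (i + 2)) × (M ⊗[R] G.X i) :=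
    TensorProduct.prodRight R R M _ _
  let E3 : M ⊗[R] (b.X (i + 3) × G.X (i + 1)) ≃ₗ[R] (M ⊗[R] b.X (i + 3)) × (M ⊗[R] G.X (i + 1)) :=
    TensorProduct.prodRight R R M _ _
  have hsM : ∀ i x, (b.d (i + 1)).lTensor M ((φ (i + 1)).lTensor M x) =
      - (φ i).lTensor M ((G.d i).lTensor M x) := by
    intro i x
    have : (b.d (i+1)) ∘ₗ φ (i+1) = - (φ i ∘ₗ G.d i) := LinearMap.ext (hs i)
    rw [← LinearMap.comp_apply, ← LinearMap.comp_apply, ← LinearMap.lTensor_comp, this,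
      LinearMap.lTensor_neg, LinearMap.lTensor_comp]
    rfl
  -- incoming differential
  have hin : ∀ a c, (C.d (i + 2)).lTensor M (E3.symm (a, c)) =
      E2.symm ((b.d (i + 2)).lTensor M a + (φ (i + 1)).lTensor M c, (G.d i).lTensor M c) := by
    intro a c
    apply E2.injective
    refine (lT_prod M (b.d (i + 2)) (φ (i + 1)) (G.d i) (E3.symm (a, c))).trans ?_
    change (((b.d (i + 2)).lTensor M (E3 (E3.symm (a, c))).1 +
      (φ (i + 1)).lTensor M (E3 (E3.symm (a, c))).2),
      (G.d i).lTensor M (E3 (E3.symm (a, c))).2) = _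
    rw [LinearEquiv.apply_symm_apply, LinearEquiv.apply_symm_apply]
  -- outgoing differential
  have hout : ∀ a c, (C.prevd (i + 2)).lTensor M (E2.symm (a, c)) = 0 ↔
      (b.d (i + 1)).lTensor M a + (φ i).lTensor M c = 0 ∧ (G.prevd i).lTensor M c = 0 := by
    intro a c
    have hE : E2 (E2.symm (a, c)) = (a, c) := LinearEquiv.apply_symm_apply _ _
    cases i with
    | zero =>
      have h1 := lT_coprod M (b.d 1) (φ 0) (E2.symm (a, c))
      have h2 : ((b.d 1).coprod (φ 0)).lTensor M (E2.symm (a, c)) =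
        (b.d 1).lTensor M (E2 (E2.symm (a, c))).1 + (φ 0).lTensor M (E2 (E2.symm (a, c))).2 := h1
      rw [hE] at h2
      have h3 : (G.prevd 0).lTensor M c = 0 := by
        change (LinearMap.lTensor M 0) c = 0
        simp
      change ((b.d 1).coprod (φ 0)).lTensor M (E2.symm (a, c)) = 0 ↔ _
      rw [h2]
      exact ⟨fun h => ⟨h, h3⟩, fun h => h.1⟩
    | succ i =>
      let E1 : M ⊗[R] (b.X (i + 2) × G.X i) ≃ₗ[R] (M ⊗[R] b.X (i + 2)) × (M ⊗[R] G.X i) :=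
        TensorProduct.prodRight R R M _ _
      have h2 : E1 ((((b.d (i + 2)).coprod (φ (i + 1))).prod
          ((G.d i) ∘ₗ LinearMap.snd R _ _)).lTensor M (E2.symm (a, c))) =
          ((b.d (i + 2)).lTensor M (E2 (E2.symm (a, c))).1 +
            (φ (i + 1)).lTensor M (E2 (E2.symm (a, c))).2,
            (G.d i).lTensor M (E2 (E2.symm (a, c))).2) :=
        lT_prod M (b.d (i + 2)) (φ (i + 1)) (G.d i) (E2.symm (a, c))
      rw [hE] at h2
      change ((((b.d (i + 2)).coprod (φ (i + 1))).prod
          ((G.d i) ∘ₗ LinearMap.snd R _ _)).lTensor M (E2.symm (a, c))) = 0 ↔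
          _ ∧ (G.d i).lTensor M c = 0
      rw [← E1.map_eq_zero_iff, h2]
      exact Prod.mk_eq_zero
  have hφ : ∀ c, (G.prevd i).lTensor M c = 0 → (b.d i).lTensor M ((φ i).lTensor M c) = 0 := by
    intro c hc
    cases i with
    | zero =>
      have : (b.d 0) ∘ₗ φ 0 = 0 := LinearMap.ext (fun g => (h0 g).1)
      rw [← LinearMap.comp_apply, ← LinearMap.lTensor_comp, this, LinearMap.lTensor_zero]; rfl
    | succ i =>
      change (G.d i).lTensor M c = 0 at hc
      rw [hsM, hc, map_zero, neg_zero]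
  obtain ⟨a3⟩ := homology_iso
    (ShortComplex.moduleCatMk ((C.d (i+2)).lTensor M) ((C.prevd (i+2)).lTensor M) (C.prevd_comp M (i + 2)))
    (ShortComplex.moduleCatMk ((G.d i).lTensor M) ((G.prevd i).lTensor M) (G.prevd_comp M i))
    (LinearMap.snd R _ _ ∘ₗ E2.toLinearMap)
    (by
      intro x hx
      obtain ⟨⟨a, c⟩, rfl⟩ := E2.symm.surjective x
      have := ((hout a c).1 hx).2
      change (G.prevd i).lTensor M (E2 (E2.symm (a, c))).2 = 0
      rw [LinearEquiv.apply_symm_apply]; exact this)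
    (by
      intro c hc
      obtain ⟨a, ha⟩ := (e1 _).1 (hφ c hc)
      refine ⟨E2.symm (-a, c), (hout _ _).2 ⟨?_, hc⟩, ?_⟩
      · rw [map_neg, ha, neg_add_cancel]
      · change (E2 (E2.symm (-a, c))).2 = c
        rw [LinearEquiv.apply_symm_apply])
    (by
      intro x hx
      obtain ⟨⟨a, c⟩, rfl⟩ := E2.symm.surjective x
      obtain ⟨h1, h2⟩ := ((hout a c).1 hx)
      have ht : (LinearMap.snd R _ _ ∘ₗ E2.toLinearMap) (E2.symm (a, c)) = c := by
        change (E2 (E2.symm (a, c))).2 = c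
        rw [LinearEquiv.apply_symm_apply]
      constructor
      · rintro ⟨(y : M ⊗[R] G.X (i + 1)), hy⟩
        have hy' : (G.d i).lTensor M y = c := hy.trans ht
        obtain ⟨z, hz⟩ := (e2 (a - (φ (i + 1)).lTensor M y)).1 (by
          rw [map_sub, hsM, sub_neg_eq_add, hy', h1])
        refine ⟨E3.symm (z, y), (hin z y).trans ?_⟩
        rw [hz, hy', sub_add_cancel]
      · rintro ⟨z, hz⟩
        obtain ⟨⟨a', c'⟩, rfl⟩ := E3.symm.surjective z
        have h3 := E2.symm.injective ((hin a' c').symm.trans hz)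
        exact ⟨c', (Prod.mk.inj h3).2.trans ht.symm⟩)
  exact ⟨a1 ≪≫ a3.symm ≪≫ a2.symm⟩

end cone

/-- Let `Q` be a Noetherian ring, `f` a nonzerodivisor on `Q`, `R = Q/(f)`, and
`M, N` finitely generated `R`-modules.  If `Tor_i^Q(M,N) = 0` for all `i ≥ n`, then
`Tor_i^R(M,N) ≅ Tor_{i+2}^R(M,N)` for all `i ≥ n − 1`. -/
theorem stmt2 (Q : Type) [CommRing Q] [IsNoetherianRing Q]
    (f : Q) (hf : f ∈ nonZeroDivisors Q)
    (M N : Type) [AddCommGroup M] [AddCommGroup N]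
    [Module Q M] [Module Q N]
    [Module (Q ⧸ Ideal.span {f}) M] [Module (Q ⧸ Ideal.span {f}) N]
    [IsScalarTower Q (Q ⧸ Ideal.span {f}) M] [IsScalarTower Q (Q ⧸ Ideal.span {f}) N]
    [Module.Finite (Q ⧸ Ideal.span {f}) M] [Module.Finite (Q ⧸ Ideal.span {f}) N]
    (n : ℕ) (hQ : ∀ i : ℕ, n ≤ i → Subsingleton (TorObj Q i M N)) :
    ∀ i : ℕ, n ≤ i + 1 →
      Nonempty (TorObj (Q ⧸ Ideal.span {f}) i M N ≅
        TorObj (Q ⧸ Ideal.span {f}) (i + 2) M N) := by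
  intro i hi
  obtain ⟨r⟩ := PRes.exists_pres Q N
  obtain ⟨G⟩ := PRes.exists_pres (Q ⧸ Ideal.span {f}) N
  obtain ⟨b, hb⟩ := exists_bar f hf N r
  obtain ⟨φ, h0, hs⟩ := exists_phi b G
  exact tor_iso_of_exact b G φ h0 hs M i
    (hb M i (r.exact_of_tor M i (hQ (i + 1) hi)))
    (hb M (i + 1) (r.exact_of_tor M (i + 1) (hQ (i + 2) (by omega))))
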